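/- arXiv:1111.2777 — 2 statements merged into one kernel-verified Lean document; each statement's English description precedes it below -/
import Mathlib

section
/- A commutative Noetherian local ring R has finite global dimension if and only if R is a regular local ring, and in that case the global dimension of R equals the Krull dimension of R. -/
/-!
STATEMENT 6 (Serre): a commutative Noetherian local ring `R` has finite global dimension
if and only if `R` is a regular local ring; and in that case the global dimension of `R`
equals the Krull dimension of `R` (expressed here by: `gd(R) ≤ n ↔ dim R ≤ n` for all `n`).
-/

open CategoryTheory

/-- `M` has projective dimension `≤ n`. -/
def ProjDimLE (R : Type) [Ring R] (M : ModuleCat R) (n : ℕ) : Prop :=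
  ∃ P : ProjectiveResolution M, ∀ i : ℕ, n < i → Limits.IsZero (P.complex.X i)

/-- `R` has global dimension `≤ n`: every `R`-module has projective dimension `≤ n`. -/
def GlobalDimLE (R : Type) [Ring R] (n : ℕ) : Prop :=
  ∀ M : ModuleCat.{0} R, ProjDimLE R M n

/-- A commutative Noetherian local ring is regular if the embedding dimension
`dim_{R/m} (m/m²)` equals the Krull dimension of `R`. -/
def IsRegularLocal (R : Type) [CommRing R] [IsLocalRing R] : Prop :=
  (Module.finrank (IsLocalRing.ResidueField R) (IsLocalRing.CotangentSpace R) :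
    WithBot (WithTop ℕ)) = ringKrullDim R

section ProjDim
open CategoryTheory Limits

variable {C : Type*} [Category* C] [Abelian C]

/-- A constructor for projective resolutions. -/
noncomputable def projResOfExact (K : ChainComplex C ℕ) (Z : C) (hK : ∀ n, Projective (K.X n))
    (f : K.X 0 ⟶ Z) (w : K.d 1 0 ≫ f = 0) (hf : Epi f)
    (h0 : (ShortComplex.mk _ _ w).Exact) (hs : ∀ n, K.ExactAt (n + 1)) :
    ProjectiveResolution Z where
  complex := K
  projective := hK
  π := (ChainComplex.toSingle₀Equiv _ _).symm ⟨f, w⟩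
  quasiIso := ⟨fun n => by
    cases n with
    | zero =>
      rw [ChainComplex.quasiIsoAt₀_iff, ShortComplex.quasiIso_iff_of_zeros']
      · have key : ((ChainComplex.toSingle₀Equiv K Z).symm ⟨f, w⟩).f 0 = f := by simp
        refine (ShortComplex.exact_and_epi_g_iff_of_iso ?_).2 ⟨h0, hf⟩
        exact ShortComplex.isoMk (Iso.refl _) (Iso.refl _) (Iso.refl _)
          ((Category.id_comp _).trans (Category.comp_id _).symm)
          ((Category.id_comp _).trans (key.symm.trans (Category.comp_id _).symm))
      · exact K.shape _ _ (by simp)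
      · rfl
      · rfl
    | succ n =>
      rw [quasiIsoAt_iff_exactAt']
      · apply hs
      · apply ChainComplex.exactAt_succ_single_obj⟩

lemma exists_projRes_splice {S : ShortComplex C} (hS : S.ShortExact) (hP : Projective S.X₂)
    (n : ℕ) (Q : ProjectiveResolution S.X₁) (hQ : ∀ i, n < i → IsZero (Q.complex.X i)) :
    ∃ P : ProjectiveResolution S.X₃, ∀ i, n + 1 < i → IsZero (P.complex.X i) := by
  obtain ⟨p, hp, wp, hex⟩ : ∃ (p : Q.complex.X 0 ⟶ S.X₁) (_ : Epi p)
      (w : Q.complex.d 1 0 ≫ p = 0), (ShortComplex.mk _ _ w).Exact :=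
    ⟨Q.π.f 0, inferInstanceAs (Epi (Q.π.f 0)), Q.complex_d_comp_π_f_zero, Q.exact₀⟩
  have h1 := hS.epi_g
  have h2 := hS.mono_f
  have w : Q.complex.d 1 0 ≫ (p ≫ S.f) = 0 := by
    rw [← Category.assoc, wp, zero_comp]
  let K := Q.complex.augment (p ≫ S.f) w
  have hK : ∀ n, Projective (K.X n) := by
    rintro (_ | n)
    · exact hP
    · exact Q.projective n
  have w' : (p ≫ S.f) ≫ S.g = 0 := by simp
  have w0 : K.d 1 0 ≫ S.g = 0 := w'
  refine ⟨projResOfExact K S.X₃ hK S.g w0 h1 ?_ ?_, ?_⟩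
  · have : (ShortComplex.mk (p ≫ S.f) S.g w').Exact := by
      let α : ShortComplex.mk (p ≫ S.f) S.g w' ⟶ S :=
        { τ₁ := p
          τ₂ := 𝟙 _
          τ₃ := 𝟙 _ }
      have : Epi α.τ₁ := hp
      have : IsIso α.τ₂ := inferInstanceAs (IsIso (𝟙 _))
      have : Mono α.τ₃ := inferInstanceAs (Mono (𝟙 _))
      rw [ShortComplex.exact_iff_of_epi_of_isIso_of_mono α]
      exact hS.exact
    exact this
  · rintro (_ | n)
    · rw [HomologicalComplex.exactAt_iff' _ 2 1 0 (by simp) (by simp)]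
      have : (ShortComplex.mk (Q.complex.d 1 0) (p ≫ S.f) w).Exact := by
        let α : ShortComplex.mk _ _ wp ⟶ ShortComplex.mk (Q.complex.d 1 0) (p ≫ S.f) w :=
          { τ₁ := 𝟙 _
            τ₂ := 𝟙 _
            τ₃ := S.f }
        have : Epi α.τ₁ := inferInstanceAs (Epi (𝟙 _))
        have : IsIso α.τ₂ := inferInstanceAs (IsIso (𝟙 _))
        have : Mono α.τ₃ := h2
        rw [← ShortComplex.exact_iff_of_epi_of_isIso_of_mono α]
        exact hex
      exact this
    · rw [HomologicalComplex.exactAt_iff' _ (n + 3) (n + 2) (n + 1) (by simp) (by simp)]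
      exact Q.exact_succ n
  · rintro (_ | i) hi
    · omega
    · exact hQ i (by omega)

lemma hasProjectiveDimensionLE_of_res [HasExt.{0} C] {M : C} (n : ℕ) (P : ProjectiveResolution M)
   (hQ : ∀ i, n < i → IsZero (P.complex.X i)) : HasProjectiveDimensionLE M n := by
  refine (hasProjectiveDimensionLT_iff M (n + 1)).mpr ?_
  intro i hi Y e
  obtain ⟨f, hf, rfl⟩ := P.extMk_surjective e (i+1) rfl
  have : f = 0 := (hQ i (by omega)).eq_of_src _ _
  subst this
  simp

end ProjDim

lemma projDimLE_iff (R : Type) [Ring R] (M : ModuleCat.{0} R) (n : ℕ) :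
    ProjDimLE R M n ↔ HasProjectiveDimensionLE M n := by
  constructor
  · rintro ⟨P, hP⟩
    exact hasProjectiveDimensionLE_of_res n P hP
  · intro h
    induction n generalizing M with
    | zero =>
      have : Projective M := (projective_iff_hasProjectiveDimensionLE_zero M).mpr h
      refine ⟨ProjectiveResolution.self M, ?_⟩
      intro i hi
      exact HomologicalComplex.isZero_single_obj_X _ _ _ _ (by omega)
    | succ n ih =>
      have S_exact := M.shortExact_projectiveShortComplex
      have := (S_exact.hasProjectiveDimensionLT_X₃_iff n inferInstance).mp h
      obtain ⟨Q, hQ⟩ := ih _ this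
      exact exists_projRes_splice S_exact inferInstance n Q hQ

section Baer
open CategoryTheory Abelian Limits

variable {R : Type} [CommRing R]

lemma injective_of_ext_quotient (N : ModuleCat.{0} R)
    (h : ∀ I : Ideal R, Subsingleton (Ext (ModuleCat.of R (R ⧸ I)) N 1)) :
    HasInjectiveDimensionLT N 1 := by
  rw [← injective_iff_hasInjectiveDimensionLT_one, ← Module.injective_iff_injective_object,
    ← Module.Baer.iff_injective]
  intro I g
  let S : ShortComplex (ModuleCat.{0} R) :=
    ModuleCat.shortComplexOfCompEqZero I.subtype I.mkQ
      (LinearMap.exact_subtype_mkQ I).linearMap_comp_eq_zero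
  have hS : S.ShortExact :=
    { exact := ModuleCat.shortComplex_exact _ (LinearMap.exact_subtype_mkQ I)
      mono_f := (ModuleCat.mono_iff_injective _).mpr I.subtype_injective
      epi_g := (ModuleCat.epi_iff_surjective _).mpr I.mkQ_surjective }
  have := h I
  obtain ⟨x₂, hx₂⟩ := Ext.contravariant_sequence_exact₁ hS N (Ext.mk₀ (ModuleCat.ofHom g))
    (add_zero 1) ((h I).elim _ _)
  obtain ⟨f, rfl⟩ := (Ext.mk₀_bijective _ _).2 x₂
  rw [Ext.mk₀_comp_mk₀, (Ext.mk₀_bijective _ _).1.eq_iff] at hx₂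
  refine ⟨f.hom, fun x hx => ?_⟩
  have := congrArg (fun q => q.hom ⟨x, hx⟩) hx₂
  exact this

lemma injdim_of_ext_quotient (n : ℕ) (N : ModuleCat.{0} R)
    (h : ∀ I : Ideal R, Subsingleton (Ext (ModuleCat.of R (R ⧸ I)) N (n + 1))) :
    HasInjectiveDimensionLT N (n + 1) := by
  induction n generalizing N with
  | zero => exact injective_of_ext_quotient N h
  | succ n ih =>
    let S : ShortComplex (ModuleCat.{0} R) :=
      ShortComplex.mk (Injective.ι N) (cokernel.π (Injective.ι N)) (by simp)
    have hS : S.ShortExact :=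
      { exact := ShortComplex.exact_cokernel _
        mono_f := inferInstanceAs (Mono (Injective.ι N))
        epi_g := inferInstanceAs (Epi (cokernel.π (Injective.ι N))) }
    have hinj : Injective S.X₂ := inferInstanceAs (Injective (Injective.under N))
    refine (hS.hasInjectiveDimensionLT_X₃_iff n hinj).mp (ih _ fun I => ?_)
    refine ⟨fun a b => ?_⟩
    suffices H : ∀ a : Ext (ModuleCat.of R (R ⧸ I)) S.X₃ (n + 1), a = 0 by rw [H a, H b]
    intro a
    obtain ⟨x₂, rfl⟩ := Ext.covariant_sequence_exact₃ _ hS a rfl ((h I).elim _ _)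
    rw [Ext.eq_zero_of_injective x₂, Ext.zero_comp]

lemma gd_of_quotients (n : ℕ)
    (h : ∀ I : Ideal R, HasProjectiveDimensionLE (ModuleCat.of R (R ⧸ I)) n)
    (M : ModuleCat.{0} R) : HasProjectiveDimensionLE M n := by
  refine (hasProjectiveDimensionLT_iff M (n + 1)).mpr fun i hi N e => ?_
  have : HasInjectiveDimensionLT N (n + 1) := injdim_of_ext_quotient n N fun I =>
    (h I).subsingleton _ _ _ le_rfl _
  exact e.eq_zero_of_hasInjectiveDimensionLT (n + 1) hi

end Baer

section ChangeOfRings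

open IsLocalRing

variable {R : Type} [CommRing R]

lemma cr_smul_top_mem {x : R} {M : Type} [AddCommGroup M] [Module R M] (m : M) :
    (Submodule.Quotient.mk m : QuotSMulTop x M) = 0 ↔ ∃ n : M, x • n = m := by
  rw [Submodule.Quotient.mk_eq_zero, Submodule.mem_smul_pointwise_iff_exists]
  simp

/-- reduction modulo `x` of a linear map, as a linear map over `R/x`. -/
noncomputable def crMap (x : R) {M N : Type} [AddCommGroup M] [Module R M] [AddCommGroup N]
    [Module R N] (f : M →ₗ[R] N) :
    QuotSMulTop x M →ₗ[R ⧸ Ideal.span {x}] QuotSMulTop x N :=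
  (QuotSMulTop.map x f).extendScalarsOfSurjective Ideal.Quotient.mk_surjective

lemma crMap_mk (x : R) {M N : Type} [AddCommGroup M] [Module R M] [AddCommGroup N]
    [Module R N] (f : M →ₗ[R] N) (m : M) :
    crMap x f (Submodule.Quotient.mk m) = Submodule.Quotient.mk (f m) := rfl

lemma crMap_shortExact (x : R) {M N P : Type} [AddCommGroup M] [Module R M] [AddCommGroup N]
    [Module R N] [AddCommGroup P] [Module R P] (f : M →ₗ[R] N) (g : N →ₗ[R] P)
    (hf : Function.Injective f) (hfg : Function.Exact f g) (hg : Function.Surjective g)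
    (reg : IsSMulRegular P x) :
    ∃ h : crMap x g ∘ₗ crMap x f = 0,
    (ModuleCat.shortComplexOfCompEqZero (crMap x f) (crMap x g) h).ShortExact := by
  have hgf : ∀ m, g (f m) = 0 := fun m => hfg.apply_apply_eq_zero m
  have h : crMap x g ∘ₗ crMap x f = 0 := by
    refine LinearMap.ext fun m => ?_
    obtain ⟨m, rfl⟩ := Submodule.Quotient.mk_surjective _ m
    rw [LinearMap.comp_apply, crMap_mk, crMap_mk, hgf, LinearMap.zero_apply]
    exact Submodule.Quotient.mk_zero _
  refine ⟨h, ?_⟩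
  refine { exact := ?_, mono_f := ?_, epi_g := ?_ }
  · apply ModuleCat.shortComplex_exact
    exact QuotSMulTop.map_exact x hfg hg
  · apply (ModuleCat.mono_iff_injective _).2
    change Function.Injective (crMap x f)
    rw [injective_iff_map_eq_zero]
    intro m hm
    obtain ⟨m, rfl⟩ := Submodule.Quotient.mk_surjective _ m
    rw [crMap_mk, cr_smul_top_mem] at hm
    obtain ⟨n, hn⟩ := hm
    have : g n = 0 := by
      apply reg
      simp only [smul_zero, ← map_smul, hn, hgf]
    obtain ⟨m', rfl⟩ := (hfg n).1 this
    rw [cr_smul_top_mem]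
    exact ⟨m', hf (by rw [map_smul, hn])⟩
  · apply (ModuleCat.epi_iff_surjective _).2
    exact QuotSMulTop.map_surjective x hg

lemma isLocalRing_quot [IsLocalRing R] {x : R} (hx : x ∈ maximalIdeal R) :
    IsLocalRing (R ⧸ Ideal.span {x}) := by
  have : Nontrivial (R ⧸ Ideal.span {x}) := by
    apply Ideal.Quotient.nontrivial_iff.2
    intro h
    have : Ideal.span {x} ≤ maximalIdeal R := by
      rwa [Ideal.span_singleton_le_iff_mem]
    rw [h] at this
    exact (maximalIdeal.isMaximal R).ne_top (top_le_iff.1 this)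
  exact IsLocalRing.of_surjective' (Ideal.Quotient.mk _) Ideal.Quotient.mk_surjective

lemma projective_iff_free [IsLocalRing R] (M : Type) [AddCommGroup M] [Module R M]
    [Module.Finite R M] [IsNoetherianRing R] :
    HasProjectiveDimensionLE (ModuleCat.of R M) 0 ↔ Module.Free R M := by
  rw [← projective_iff_hasProjectiveDimensionLE_zero, ← IsProjective.iff_projective]
  constructor
  · intro h
    have := Module.finitePresentation_of_finite R M
    exact Module.free_of_flat_of_isLocalRing
  · intro h
    infer_instance

theorem change_of_rings [IsLocalRing R] [IsNoetherianRing R] {x : R} (hx : x ∈ maximalIdeal R)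
    (regR : IsSMulRegular R x) (n : ℕ) (M : Type) [AddCommGroup M] [Module R M]
    [Module.Finite R M] (regM : IsSMulRegular M x) :
    HasProjectiveDimensionLE (ModuleCat.of (R ⧸ Ideal.span {x}) (QuotSMulTop x M)) n ↔
      HasProjectiveDimensionLE (ModuleCat.of R M) n := by
  have := isLocalRing_quot hx
  induction n generalizing M with
  | zero =>
    have := Module.finitePresentation_of_finite R M
    have := Module.Finite.of_restrictScalars_finite R (R ⧸ Ideal.span {x}) (QuotSMulTop x M)
    rw [projective_iff_free, projective_iff_free]
    apply Module.free_quotSMulTop_iff_free _ _ _ regM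
    rwa [IsLocalRing.jacobson_eq_maximalIdeal _ bot_ne_top]
  | succ n ih =>
    obtain ⟨F, _, _, _, _, f, hf⟩ := Module.exists_finite_presentation R M
    have regF : IsSMulRegular F x := by
      let b := Module.Free.chooseBasis R F
      intro a c hac
      apply b.repr.injective
      ext i
      apply regR
      have := congrArg (fun t => b.repr t i) hac
      simpa using this
    have regK : IsSMulRegular (LinearMap.ker f) x := by
      intro a c hac
      apply Subtype.ext
      exact regF (congrArg Subtype.val hac)
    have S1 := LinearMap.shortExact_shortComplexKer hf
    obtain ⟨h, S2⟩ := crMap_shortExact x (LinearMap.ker f).subtype f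
      (Submodule.subtype_injective _) (LinearMap.exact_subtype_ker_map f) hf regM
    have p1 : Projective (ModuleCat.of R F) := by
      rw [← IsProjective.iff_projective]; infer_instance
    have p2 : Projective (ModuleCat.of (R ⧸ Ideal.span {x}) (QuotSMulTop x F)) := by
      rw [← IsProjective.iff_projective]; infer_instance
    have e1 := S1.hasProjectiveDimensionLT_X₃_iff n p1
    have e2 := S2.hasProjectiveDimensionLT_X₃_iff n p2
    exact (e2.trans (ih (LinearMap.ker f) regK)).trans e1.symm

end ChangeOfRings

section EmbDim

open IsLocalRing

variable {R : Type} [CommRing R] [IsLocalRing R] [IsNoetherianRing R]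

lemma exists_complement {x : R} (hx : x ∈ maximalIdeal R) (hx2 : x ∉ maximalIdeal R ^ 2) :
    ∃ s : Finset R, s.card + 1 = (maximalIdeal R).spanFinrank ∧
      Ideal.span (s : Set R) ⊔ Ideal.span {x} = maximalIdeal R := by
  classical
  obtain ⟨t, ht, hspan⟩ := Submodule.FG.exists_span_finset_card_eq_spanFinrank
    (IsNoetherian.noetherian (maximalIdeal R))
  have hx' := hx
  rw [← hspan, Submodule.mem_span_finset] at hx'
  obtain ⟨a, -, ha⟩ := hx'
  have htm : ∀ y ∈ t, y ∈ maximalIdeal R := fun y hy => by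
    rw [← hspan]; exact Submodule.subset_span hy
  obtain ⟨j, hj, hju⟩ : ∃ j ∈ t, IsUnit (a j) := by
    by_contra! hcon
    apply hx2
    rw [← ha, pow_two]
    refine Ideal.sum_mem _ fun y hy => ?_
    exact Ideal.mul_mem_mul ((mem_maximalIdeal _).2 (hcon y hy)) (htm y hy)
  refine ⟨t.erase j, ?_, ?_⟩
  · rw [Finset.card_erase_add_one hj, ht]
  · apply le_antisymm
    · refine sup_le (Ideal.span_le.2 fun y hy => htm y (Finset.mem_of_mem_erase hy)) ?_
      rwa [Ideal.span_singleton_le_iff_mem]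
    · conv_lhs => rw [← hspan]
      apply Submodule.span_le.2
      intro y hy
      by_cases hyj : y = j
      · subst hyj
        rw [← Finset.add_sum_erase _ _ hj] at ha
        have h1 : a y * y = x - ∑ i ∈ t.erase y, a i * i := by
          rw [← ha]; simp
        have h2 : a y * y ∈ Ideal.span ((t.erase y : Finset R) : Set R) ⊔ Ideal.span {x} := by
          rw [h1]
          refine Ideal.sub_mem _ (Ideal.mem_sup_right (Ideal.mem_span_singleton_self x)) ?_
          refine Ideal.sum_mem _ fun i hi => ?_
          exact Ideal.mul_mem_left _ _ (Ideal.mem_sup_left (Ideal.subset_span hi))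
        exact (Ideal.unit_mul_mem_iff_mem _ hju).1 h2
      · exact Ideal.mem_sup_left (Ideal.subset_span (Finset.mem_coe.2 (Finset.mem_erase.2 ⟨hyj, hy⟩)))

lemma notMem_complement {x : R} {s : Finset R}
    (hs : s.card + 1 = (maximalIdeal R).spanFinrank)
    (h : Ideal.span (s : Set R) ⊔ Ideal.span {x} = maximalIdeal R) :
    x ∉ Ideal.span (s : Set R) := by
  intro hx
  rw [sup_eq_left.2 ((Ideal.span_singleton_le_iff_mem _).2 hx)] at h
  have := Submodule.spanFinrank_span_le_ncard_of_finite (R := R) (s.finite_toSet)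
  rw [Set.ncard_coe_finset] at this
  change (Ideal.span (s : Set R)).spanFinrank ≤ _ at this
  rw [h] at this
  omega

lemma map_maximalIdeal_quot {x : R} [IsLocalRing (R ⧸ Ideal.span {x})] :
    (maximalIdeal R).map (Ideal.Quotient.mk (Ideal.span {x})) =
      maximalIdeal (R ⧸ Ideal.span {x}) :=
  IsLocalRing.map_maximalIdeal_of_surjective _ Ideal.Quotient.mk_surjective

lemma embdim_quot_le {x : R} (hx : x ∈ maximalIdeal R) (hx2 : x ∉ maximalIdeal R ^ 2)
    [IsLocalRing (R ⧸ Ideal.span {x})] :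
    (maximalIdeal (R ⧸ Ideal.span {x})).spanFinrank + 1 ≤ (maximalIdeal R).spanFinrank := by
  classical
  obtain ⟨s, hs, h⟩ := exists_complement hx hx2
  rw [← hs, ← map_maximalIdeal_quot, ← h, Ideal.map_sup, Ideal.map_span, Ideal.map_span]
  have : Ideal.span ((Ideal.Quotient.mk (Ideal.span {x})) '' {x}) = ⊥ := by
    rw [Set.image_singleton, Ideal.span_singleton_eq_bot, Ideal.Quotient.eq_zero_iff_mem]
    exact Ideal.mem_span_singleton_self x
  rw [this, sup_bot_eq]
  have h1 := Submodule.spanFinrank_span_le_ncard_of_finite (R := R ⧸ Ideal.span {x})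
    (s.finite_toSet.image (Ideal.Quotient.mk (Ideal.span {x})))
  have h2 := Set.ncard_image_le (f := Ideal.Quotient.mk (Ideal.span {x})) s.finite_toSet
  rw [Set.ncard_coe_finset] at h2
  exact Nat.succ_le_succ (h1.trans h2)

lemma embdim_le_quot {x : R} (hx : x ∈ maximalIdeal R)
    [IsLocalRing (R ⧸ Ideal.span {x})] :
    (maximalIdeal R).spanFinrank ≤ (maximalIdeal (R ⧸ Ideal.span {x})).spanFinrank + 1 := by
  classical
  obtain ⟨t, ht, hspan⟩ := Submodule.FG.exists_span_finset_card_eq_spanFinrank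
    (IsNoetherian.noetherian (maximalIdeal (R ⧸ Ideal.span {x})))
  obtain ⟨g, hg⟩ := (Ideal.Quotient.mk_surjective (I := Ideal.span {x})).hasRightInverse
  have key : Ideal.span ((insert x (t.image g) : Finset R) : Set R) = maximalIdeal R := by
    apply le_antisymm
    · apply Ideal.span_le.2
      intro y hy
      rcases Finset.mem_insert.1 (Finset.mem_coe.1 hy) with rfl | hy
      · exact hx
      · obtain ⟨z, hz, rfl⟩ := Finset.mem_image.1 hy
        have hz' : z ∈ maximalIdeal (R ⧸ Ideal.span {x}) := by
          rw [← hspan]; exact Submodule.subset_span hz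
        rw [SetLike.mem_coe, mem_maximalIdeal]
        intro hu
        have := hu.map (Ideal.Quotient.mk (Ideal.span {x}))
        rw [hg] at this
        exact (mem_maximalIdeal _).1 hz' this
    · have h1 : (maximalIdeal R).map (Ideal.Quotient.mk (Ideal.span {x})) ≤
          (Ideal.span ((insert x (t.image g) : Finset R) : Set R)).map
            (Ideal.Quotient.mk (Ideal.span {x})) := by
        rw [map_maximalIdeal_quot, ← hspan]
        apply Submodule.span_le.2
        intro z hz
        rw [← hg z]
        apply Ideal.mem_map_of_mem
        apply Ideal.subset_span
        exact Finset.mem_coe.2 (Finset.mem_insert_of_mem (Finset.mem_image_of_mem _ hz))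
      have h2 := Ideal.map_le_iff_le_comap.1 h1
      rw [Ideal.comap_map_of_surjective' _ Ideal.Quotient.mk_surjective, Ideal.mk_ker] at h2
      refine h2.trans (sup_le le_rfl ?_)
      rw [Ideal.span_singleton_le_iff_mem]
      exact Ideal.subset_span (Finset.mem_coe.2 (Finset.mem_insert_self _ _))
  rw [← ht, ← key]
  have h1 := Submodule.spanFinrank_span_le_ncard_of_finite (R := R)
    (insert x (t.image g)).finite_toSet
  rw [Set.ncard_coe_finset] at h1
  refine h1.trans ((Finset.card_insert_le _ _).trans (Nat.succ_le_succ Finset.card_image_le))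

lemma krullDim_quot_ge {x : R} (hx : x ∈ maximalIdeal R) :
    ringKrullDim R ≤ ringKrullDim (R ⧸ Ideal.span {x}) + 1 := by
  have := ringKrullDim_le_ringKrullDim_quotient_add_card ({x} : Finset R)
    (by rw [IsLocalRing.ringJacobson_eq_maximalIdeal]; simpa using hx)
  rw [Finset.coe_singleton] at this
  simpa using this

lemma regular_quot [IsRegularLocalRing R] {x : R} (hx : x ∈ maximalIdeal R)
    (hx2 : x ∉ maximalIdeal R ^ 2) [IsLocalRing (R ⧸ Ideal.span {x})] :
    IsRegularLocalRing (R ⧸ Ideal.span {x}) := by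
  apply IsRegularLocalRing.of_spanFinrank_maximalIdeal_le
  have h1 := embdim_quot_le hx hx2
  have h2 := krullDim_quot_ge hx
  rw [← (isRegularLocalRing_iff R).1 inferInstance] at h2
  have h3 : (((maximalIdeal (R ⧸ Ideal.span {x})).spanFinrank : ℕ) : WithBot ℕ∞) + 1 ≤
      ringKrullDim (R ⧸ Ideal.span {x}) + 1 := le_trans (by exact_mod_cast h1) h2
  exact (ENat.WithBot.add_le_add_one_right_iff).1 h3

lemma regular_of_quot {x : R} (hx : x ∈ maximalIdeal R) (reg : IsSMulRegular R x)
    [IsRegularLocalRing (R ⧸ Ideal.span {x})] :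
    IsRegularLocalRing R := by
  apply IsRegularLocalRing.of_spanFinrank_maximalIdeal_le
  rw [← ringKrullDim_quotient_span_singleton_succ_eq_ringKrullDim reg hx,
    ← (isRegularLocalRing_iff (R ⧸ Ideal.span {x})).1 inferInstance]
  exact_mod_cast embdim_le_quot hx

end EmbDim

section RegularDomain

open IsLocalRing

lemma avoid {R : Type} [CommRing R] [IsLocalRing R]
    (S : Set (Ideal R)) (hS : S.Finite) (hp : ∀ p ∈ S, p.IsPrime)
    (hm : ∀ p ∈ S, ¬ maximalIdeal R ≤ p) (hm2 : ¬ maximalIdeal R ≤ maximalIdeal R ^ 2) :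
    ∃ x ∈ maximalIdeal R, x ∉ maximalIdeal R ^ 2 ∧ ∀ p ∈ S, x ∉ p := by
  have h := Ideal.subset_union_prime_finite (s := insert (maximalIdeal R ^ 2) S) (hS.insert _)
    (f := id) (maximalIdeal R ^ 2) (maximalIdeal R ^ 2) (I := maximalIdeal R) (by
      intro i hi h1 _
      rcases hi with rfl | hi
      · exact absurd rfl h1
      · exact hp i hi)
  have hn : ¬ ((maximalIdeal R : Set R) ⊆
      ⋃ i ∈ insert (maximalIdeal R ^ 2) S, ((id i : Ideal R) : Set R)) := by
    rw [h]
    rintro ⟨i, rfl | hi, hle⟩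
    · exact hm2 hle
    · exact hm i hi hle
  rw [Set.not_subset] at hn
  obtain ⟨x, hx, hxn⟩ := hn
  simp only [Set.mem_iUnion, not_exists] at hxn
  exact ⟨x, hx, hxn _ (Set.mem_insert _ _), fun p hpS => hxn p (Set.mem_insert_of_mem _ hpS)⟩

lemma maximalIdeal_not_le_sq {R : Type} [CommRing R] [IsLocalRing R] [IsNoetherianRing R]
    (h : maximalIdeal R ≠ ⊥) : ¬ maximalIdeal R ≤ maximalIdeal R ^ 2 := by
  intro hle
  apply h
  apply Submodule.eq_bot_of_le_smul_of_le_jacobson_bot (maximalIdeal R) _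
    (IsNoetherian.noetherian _)
  · rwa [smul_eq_mul, ← pow_two]
  · rw [IsLocalRing.jacobson_eq_maximalIdeal _ bot_ne_top]

theorem regular_isDomain (n : ℕ) : ∀ (R : Type) [CommRing R] [IsRegularLocalRing R],
    (maximalIdeal R).spanFinrank = n → IsDomain R := by
  induction n with
  | zero =>
    intro R _ _ h
    rw [Submodule.spanFinrank_eq_zero_iff_eq_bot (IsNoetherian.noetherian _)] at h
    exact (IsLocalRing.isField_iff_maximalIdeal_eq.2 h).isDomain
  | succ n ih =>
    intro R _ _ h
    have hbot : maximalIdeal R ≠ ⊥ := by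
      intro hb
      rw [hb, Submodule.spanFinrank_bot] at h
      omega
    have hdim := (isRegularLocalRing_iff R).1 inferInstance
    obtain ⟨x, hx, hx2, hxp⟩ := avoid (minimalPrimes R)
      (minimalPrimes.finite_of_isNoetherianRing R) (fun p hp => hp.1.1) (by
        intro p hp hle
        have hpp : p.IsPrime := hp.1.1
        have hpm : maximalIdeal R = p := (maximalIdeal.isMaximal R).eq_of_le hpp.ne_top hle
        have h0 : (maximalIdeal R).height = 0 := by
          rw [Ideal.height_eq_zero_iff, hpm]
          exact hp
        rw [← IsLocalRing.maximalIdeal_height_eq_ringKrullDim, h0, h] at hdim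
        norm_cast at hdim) (maximalIdeal_not_le_sq hbot)
    have := isLocalRing_quot hx
    have hreg := regular_quot hx hx2
    have e1 := embdim_quot_le hx hx2
    have e2 := embdim_le_quot hx
    have hdom := ih (R ⧸ Ideal.span {x}) (by omega)
    have hprime : (Ideal.span {x}).IsPrime := (Ideal.Quotient.isDomain_iff_prime _).1 hdom
    obtain ⟨p, hp, hple⟩ := Ideal.exists_minimalPrimes_le (I := (⊥ : Ideal R))
      (J := Ideal.span {x}) bot_le
    have hpp : p.IsPrime := hp.1.1
    have hpbot : p = ⊥ := by
      apply Submodule.eq_bot_of_le_smul_of_le_jacobson_bot (maximalIdeal R) _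
        (IsNoetherian.noetherian _)
      · intro y hy
        obtain ⟨r, rfl⟩ := Ideal.mem_span_singleton.1 (hple hy)
        have hr : r ∈ p := (hpp.mem_or_mem hy).resolve_left (hxp p hp)
        exact Ideal.mul_mem_mul hx hr
      · rw [IsLocalRing.jacobson_eq_maximalIdeal _ bot_ne_top]
    rw [hpbot] at hpp
    exact IsDomain.of_bot_isPrime R

lemma exists_good {R : Type} [CommRing R] [IsRegularLocalRing R] {n : ℕ}
    (h : (maximalIdeal R).spanFinrank = n + 1) :
    ∃ x ∈ maximalIdeal R, IsSMulRegular R x ∧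
      ∃ _ : IsRegularLocalRing (R ⧸ Ideal.span {x}),
        (maximalIdeal (R ⧸ Ideal.span {x})).spanFinrank = n := by
  have hbot : maximalIdeal R ≠ ⊥ := by
    intro hb
    rw [hb, Submodule.spanFinrank_bot] at h
    omega
  obtain ⟨x, hx, hx2⟩ := SetLike.not_le_iff_exists.1 (maximalIdeal_not_le_sq hbot)
  have := regular_isDomain _ R h
  have := isLocalRing_quot hx
  have hreg := regular_quot hx hx2
  have e1 := embdim_quot_le hx hx2
  have e2 := embdim_le_quot hx
  refine ⟨x, hx, ?_, hreg, by omega⟩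
  apply IsSMulRegular.of_ne_zero
  rintro rfl
  exact hx2 (Submodule.zero_mem _)

end RegularDomain

section RegularGlobal

open IsLocalRing

lemma hpdle_mono {R : Type} [CommRing R] {M : ModuleCat.{0} R} {n m : ℕ} (h : n ≤ m)
    (hM : HasProjectiveDimensionLE M n) : HasProjectiveDimensionLE M m :=
  hasProjectiveDimensionLT_of_ge M (n + 1) (m + 1) (by omega)

theorem regular_pd_le (n : ℕ) : ∀ (R : Type) [CommRing R] [IsRegularLocalRing R],
    (maximalIdeal R).spanFinrank = n → ∀ (M : Type) [AddCommGroup M] [Module R M]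
      [Module.Finite R M], HasProjectiveDimensionLE (ModuleCat.of R M) n := by
  induction n with
  | zero =>
    intro R _ _ h M _ _ _
    rw [Submodule.spanFinrank_eq_zero_iff_eq_bot (IsNoetherian.noetherian _)] at h
    letI := (IsLocalRing.isField_iff_maximalIdeal_eq.2 h).toField
    have hfree : Module.Free R M := Module.Free.of_divisionRing R M
    exact (projective_iff_free M).2 hfree
  | succ n ih =>
    intro R _ _ h M _ _ _
    obtain ⟨x, hx, reg, hreg, hn⟩ := exists_good h
    obtain ⟨F, _, _, _, _, f, hf⟩ := Module.exists_finite_presentation R M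
    have regF : IsSMulRegular F x := by
      let b := Module.Free.chooseBasis R F
      intro a c hac
      apply b.repr.injective
      ext i
      apply reg
      have := congrArg (fun t => b.repr t i) hac
      simpa using this
    have regK : IsSMulRegular (LinearMap.ker f) x := by
      intro a c hac
      apply Subtype.ext
      exact regF (congrArg Subtype.val hac)
    have S1 := LinearMap.shortExact_shortComplexKer hf
    have p1 : Projective (ModuleCat.of R F) := by
      rw [← IsProjective.iff_projective]; infer_instance
    have e1 := S1.hasProjectiveDimensionLT_X₃_iff n p1
    apply e1.2
    refine (change_of_rings hx reg n (LinearMap.ker f) regK).1 ?_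
    have := Module.Finite.of_restrictScalars_finite R (R ⧸ Ideal.span {x})
      (QuotSMulTop x (LinearMap.ker f))
    exact ih _ hn _

theorem regular_exists_list (n : ℕ) : ∀ (R : Type) [CommRing R] [IsRegularLocalRing R],
    (maximalIdeal R).spanFinrank = n → ∃ rs : List R, rs.length = n ∧
      RingTheory.Sequence.IsWeaklyRegular R rs ∧ Ideal.ofList rs = maximalIdeal R := by
  induction n with
  | zero =>
    intro R _ _ h
    rw [Submodule.spanFinrank_eq_zero_iff_eq_bot (IsNoetherian.noetherian _)] at h
    exact ⟨[], rfl, by simp, by simp [h]⟩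
  | succ n ih =>
    intro R _ _ h
    obtain ⟨x, hx, reg, hreg, hn⟩ := exists_good h
    obtain ⟨rs', hlen, hw, hof⟩ := ih _ hn
    obtain ⟨rs, rfl⟩ := List.map_surjective_iff.2
      (Ideal.Quotient.mk_surjective (I := Ideal.span {x})) rs'
    refine ⟨x :: rs, by simpa using hlen, ?_, ?_⟩
    · rw [RingTheory.Sequence.isWeaklyRegular_cons_iff]
      refine ⟨reg, ?_⟩
      have e : QuotSMulTop x R ≃ₗ[R] R ⧸ Ideal.span {x} :=
        Submodule.quotEquivOfEq _ _ (by
          rw [← Submodule.ideal_span_singleton_smul, smul_eq_mul, Ideal.mul_top])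
      rw [e.isWeaklyRegular_congr]
      exact (RingTheory.Sequence.isWeaklyRegular_map_algebraMap_iff
        (R ⧸ Ideal.span {x}) (R ⧸ Ideal.span {x}) rs).1 hw
    · rw [← Ideal.map_ofList, ← map_maximalIdeal_quot] at hof
      have h2 := congrArg (Ideal.comap (Ideal.Quotient.mk (Ideal.span {x}))) hof
      rw [Ideal.comap_map_of_surjective' _ Ideal.Quotient.mk_surjective,
        Ideal.comap_map_of_surjective' _ Ideal.Quotient.mk_surjective, Ideal.mk_ker,
        sup_eq_left.2 ((Ideal.span_singleton_le_iff_mem (I := maximalIdeal R)).2 hx)] at h2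
      rw [Ideal.ofList_cons, sup_comm, h2]

theorem regular_pd_residue {R : Type} [CommRing R] [IsRegularLocalRing R] {n : ℕ}
    (h : HasProjectiveDimensionLE (ModuleCat.of R (R ⧸ maximalIdeal R)) n) :
    (maximalIdeal R).spanFinrank ≤ n := by
  obtain ⟨rs, hlen, hw, hof⟩ := regular_exists_list _ R rfl
  have hmem : ∀ r ∈ rs, r ∈ maximalIdeal R := by
    intro r hr
    rw [← hof]
    exact Ideal.subset_span hr
  have h1 := ModuleCat.projectiveDimension_quotient_eq_add_length_of_isWeaklyRegular
    (ModuleCat.of R R) rs hw hmem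
  have h0 : projectiveDimension (ModuleCat.of R R) = 0 :=
    ModuleCat.projectiveDimension_eq_zero_of_projective _
  rw [h0, zero_add, hlen] at h1
  have e : (R ⧸ Ideal.ofList rs • (⊤ : Submodule R R)) ≃ₗ[R] (R ⧸ maximalIdeal R) :=
    Submodule.quotEquivOfEq _ _ (by rw [smul_eq_mul, Ideal.mul_top, hof])
  rw [projectiveDimension_eq_of_iso e.toModuleIso] at h1
  have h2 := (projectiveDimension_le_iff _ n).2 h
  rw [h1] at h2
  exact_mod_cast h2

end RegularGlobal

section DepthZero

open IsLocalRing

/-- Minimal presentations. -/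
lemma exists_minimal_presentation {R : Type} [CommRing R] [IsLocalRing R]
    (M : Type) [AddCommGroup M] [Module R M] [Module.Finite R M] :
    ∃ (t : Finset M) (f : (t → R) →ₗ[R] M), Function.Surjective f ∧
      ∀ a : t → R, f a = 0 → ∀ j, a j ∈ maximalIdeal R := by
  classical
  obtain ⟨t, ht, hspan⟩ := Submodule.FG.exists_span_finset_card_eq_spanFinrank
    (Module.Finite.fg_top (R := R) (M := M))
  refine ⟨t, Fintype.linearCombination R (Subtype.val : t → M), ?_, ?_⟩
  · rw [← LinearMap.range_eq_top, Fintype.range_linearCombination]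
    simpa using hspan
  · intro a ha j
    rw [mem_maximalIdeal]
    intro hu
    obtain ⟨u, hu⟩ := hu
    rw [Fintype.linearCombination_apply, ← Finset.add_sum_erase _ _ (Finset.mem_univ j),
      ← hu] at ha
    have hj : (j : M) ∈ Submodule.span R ((t.erase j : Finset M) : Set M) := by
      have h1 : (j : M) = -((u⁻¹ : Rˣ) : R) • ∑ i ∈ Finset.univ.erase j, a i • (i : M) := by
        rw [eq_neg_of_add_eq_zero_right ha, smul_neg, neg_smul, neg_neg, smul_smul]
        simp
      refine (congrArg (· ∈ Submodule.span R ((t.erase j : Finset M) : Set M)) h1).mpr ?_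
      refine Submodule.smul_mem _ _ (Submodule.sum_mem _ fun i hi => Submodule.smul_mem _ _ ?_)
      apply Submodule.subset_span
      rw [Finset.mem_coe, Finset.mem_erase]
      exact ⟨fun h => (Finset.ne_of_mem_erase hi) (Subtype.ext h), i.2⟩
    have htop : Submodule.span R ((t.erase j : Finset M) : Set M) = ⊤ := by
      rw [eq_top_iff, ← hspan, Submodule.span_le]
      intro y hy
      by_cases hyj : y = j
      · rw [hyj]; exact hj
      · exact Submodule.subset_span (Finset.mem_coe.2 (Finset.mem_erase.2 ⟨hyj, hy⟩))
    have h2 := Submodule.spanFinrank_span_le_ncard_of_finite (R := R) (t.erase j).finite_toSet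
    rw [Set.ncard_coe_finset, htop, ← ht] at h2
    have h3 := Finset.card_erase_add_one j.2
    omega

theorem free_of_depth_zero {R : Type} [CommRing R] [IsLocalRing R] [IsNoetherianRing R]
    {s : R} (hs : s ≠ 0) (hsm : ∀ a ∈ maximalIdeal R, s * a = 0) (n : ℕ) :
    ∀ (M : Type) [AddCommGroup M] [Module R M] [Module.Finite R M],
      HasProjectiveDimensionLE (ModuleCat.of R M) n → Module.Free R M := by
  induction n with
  | zero =>
    intro M _ _ _ h
    exact (projective_iff_free M).1 h
  | succ n ih =>
    intro M _ _ _ h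
    obtain ⟨t, f, hf, hmin⟩ := exists_minimal_presentation (R := R) M
    have S1 := LinearMap.shortExact_shortComplexKer hf
    have p1 : Projective (ModuleCat.of R (t → R)) := by
      rw [← IsProjective.iff_projective]; infer_instance
    have e1 := S1.hasProjectiveDimensionLT_X₃_iff n p1
    have hK : Module.Free R (LinearMap.ker f) := ih _ (e1.1 h)
    have hkill : ∀ a : LinearMap.ker f, s • a = 0 := by
      intro a
      ext j
      exact hsm _ (hmin a.1 a.2 j)
    have hinj : Function.Injective f := by
      rw [← LinearMap.ker_eq_bot, ← Submodule.subsingleton_iff_eq_bot]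
      let b := Module.Free.chooseBasis R (LinearMap.ker f)
      have : IsEmpty (Module.Free.ChooseBasisIndex R (LinearMap.ker f)) := by
        constructor
        intro i
        have h1 := congrArg (fun z => b.repr z i) (hkill (b i))
        simp at h1
        exact hs h1
      exact b.repr.toEquiv.subsingleton
    exact Module.Free.of_equiv (LinearEquiv.ofBijective f ⟨hinj, hf⟩)

lemma pd_residue_iff {R : Type} [CommRing R] [IsLocalRing R] (n : ℕ) :
    HasProjectiveDimensionLE (ModuleCat.of R (R ⧸ maximalIdeal R)) (n + 1) ↔
      HasProjectiveDimensionLE (ModuleCat.of R (maximalIdeal R)) n := by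
  have S1 := LinearMap.shortExact_shortComplexKer (f := (maximalIdeal R).mkQ)
    (Submodule.mkQ_surjective _)
  have p1 : Projective (ModuleCat.of R R) := by
    rw [← IsProjective.iff_projective]; infer_instance
  have e1 := S1.hasProjectiveDimensionLT_X₃_iff n p1
  have e : LinearMap.ker (maximalIdeal R).mkQ ≃ₗ[R] maximalIdeal R :=
    LinearEquiv.ofEq _ _ (Submodule.ker_mkQ _)
  refine e1.trans ⟨fun h => ?_, fun h => ?_⟩
  · exact hasProjectiveDimensionLT_of_iso e.toModuleIso (n + 1)
  · exact hasProjectiveDimensionLT_of_iso e.symm.toModuleIso (n + 1)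

lemma regular_of_maximalIdeal_eq_bot {R : Type} [CommRing R] [IsLocalRing R] [IsNoetherianRing R]
    (h : maximalIdeal R = ⊥) : IsRegularLocalRing R := by
  apply IsRegularLocalRing.of_spanFinrank_maximalIdeal_le
  rw [h, Submodule.spanFinrank_bot]
  exact ringKrullDim_nonneg_of_nontrivial

end DepthZero

section FiniteToRegular

open IsLocalRing

open Pointwise in
/-- Over `R/x`, the maximal ideal of `R/x` is a direct summand of `m/xm` if `x ∉ m²`. -/
lemma retract_maximalIdeal {R : Type} [CommRing R] [IsLocalRing R] [IsNoetherianRing R]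
    {x : R} (hx : x ∈ maximalIdeal R) (hx2 : x ∉ maximalIdeal R ^ 2)
    [IsLocalRing (R ⧸ Ideal.span {x})] :
    ∃ (i : maximalIdeal (R ⧸ Ideal.span {x}) →ₗ[R ⧸ Ideal.span {x}]
        QuotSMulTop x (maximalIdeal R))
      (p : QuotSMulTop x (maximalIdeal R) →ₗ[R ⧸ Ideal.span {x}]
        maximalIdeal (R ⧸ Ideal.span {x})), p ∘ₗ i = LinearMap.id := by
  obtain ⟨s, hs, hsup⟩ := exists_complement hx hx2
  have hxI := notMem_complement hs hsup
  set I := Ideal.span (s : Set R) with hI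
  have hIm : I ≤ maximalIdeal R := by rw [← hsup]; exact le_sup_left
  -- the projection `m → m_{R/x}`
  have hmap : ∀ a ∈ maximalIdeal R,
      Ideal.Quotient.mk (Ideal.span {x}) a ∈ maximalIdeal (R ⧸ Ideal.span {x}) := by
    intro a ha
    rw [← map_maximalIdeal_quot]
    exact Ideal.mem_map_of_mem _ ha
  let q : maximalIdeal R →ₗ[R] maximalIdeal (R ⧸ Ideal.span {x}) :=
    { toFun := fun a => ⟨Ideal.Quotient.mk (Ideal.span {x}) a.1, hmap a.1 a.2⟩
      map_add' := fun a b => Subtype.ext (map_add _ _ _)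
      map_smul' := fun r a => Subtype.ext (map_mul _ _ _) }
  have hq : x • (⊤ : Submodule R (maximalIdeal R)) ≤ LinearMap.ker q := by
    intro a ha
    obtain ⟨b, -, rfl⟩ := (Submodule.mem_smul_pointwise_iff_exists _ _ _).1 ha
    rw [LinearMap.mem_ker]
    apply Subtype.ext
    change Ideal.Quotient.mk (Ideal.span {x}) (x * b.1) = 0
    rw [Ideal.Quotient.eq_zero_iff_mem]
    exact Ideal.mul_mem_right _ _ (Ideal.mem_span_singleton_self x)
  let p0 : QuotSMulTop x (maximalIdeal R) →ₗ[R] maximalIdeal (R ⧸ Ideal.span {x}) :=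
    Submodule.liftQ _ q hq
  let inc : I →ₗ[R] maximalIdeal R := Submodule.inclusion hIm
  let π : I →ₗ[R] maximalIdeal (R ⧸ Ideal.span {x}) := q ∘ₗ inc
  have hπ : Function.Surjective π := by
    rintro ⟨z, hz⟩
    obtain ⟨a, rfl⟩ := Ideal.Quotient.mk_surjective z
    rw [← map_maximalIdeal_quot, ← Ideal.mem_comap,
      Ideal.comap_map_of_surjective' _ Ideal.Quotient.mk_surjective, Ideal.mk_ker, ← hsup,
      sup_assoc, sup_idem] at hz
    obtain ⟨b, hb, c, hc, rfl⟩ := Submodule.mem_sup.1 hz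
    refine ⟨⟨b, hb⟩, Subtype.ext ?_⟩
    change Ideal.Quotient.mk (Ideal.span {x}) b = Ideal.Quotient.mk (Ideal.span {x}) (b + c)
    rw [map_add, (Ideal.Quotient.eq_zero_iff_mem).2 hc, add_zero]
  let φ : I →ₗ[R] QuotSMulTop x (maximalIdeal R) := Submodule.mkQ _ ∘ₗ inc
  have hker : LinearMap.ker π ≤ LinearMap.ker φ := by
    intro a ha
    have h1 : Ideal.Quotient.mk (Ideal.span {x}) a.1 = 0 :=
      congrArg Subtype.val (LinearMap.mem_ker.1 ha)
    rw [Ideal.Quotient.eq_zero_iff_mem] at h1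
    obtain ⟨r, hr⟩ := Ideal.mem_span_singleton.1 h1
    have hrm : r ∈ maximalIdeal R := by
      rw [mem_maximalIdeal]
      intro hu
      apply hxI
      have := a.2
      rw [hr, mul_comm] at this
      exact (Ideal.unit_mul_mem_iff_mem _ hu).1 this
    rw [LinearMap.mem_ker]
    change (Submodule.Quotient.mk (inc a) : QuotSMulTop x (maximalIdeal R)) = 0
    rw [cr_smul_top_mem]
    exact ⟨⟨r, hrm⟩, Subtype.ext hr.symm⟩
  let e := LinearMap.quotKerEquivOfSurjective π hπ
  let i0 : maximalIdeal (R ⧸ Ideal.span {x}) →ₗ[R] QuotSMulTop x (maximalIdeal R) :=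
    (LinearMap.ker π).liftQ φ hker ∘ₗ e.symm.toLinearMap
  have hi0 : ∀ a, i0 (π a) = φ a := by
    intro a
    have : e.symm (π a) = Submodule.Quotient.mk a := by
      rw [LinearEquiv.symm_apply_eq]
      rfl
    change (LinearMap.ker π).liftQ φ hker (e.symm (π a)) = φ a
    rw [this]
    rfl
  refine ⟨i0.extendScalarsOfSurjective Ideal.Quotient.mk_surjective,
    p0.extendScalarsOfSurjective Ideal.Quotient.mk_surjective, ?_⟩
  refine LinearMap.ext fun z => ?_
  obtain ⟨a, rfl⟩ := hπ z
  change p0 (i0 (π a)) = π a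
  rw [hi0]
  rfl

theorem regular_of_pd (N : ℕ) : ∀ (R : Type) [CommRing R] [IsLocalRing R] [IsNoetherianRing R],
    (maximalIdeal R).spanFinrank = N → ∀ n,
      HasProjectiveDimensionLE (ModuleCat.of R (R ⧸ maximalIdeal R)) n →
      IsRegularLocalRing R := by
  induction N with
  | zero =>
    intro R _ _ _ h n _
    rw [Submodule.spanFinrank_eq_zero_iff_eq_bot (IsNoetherian.noetherian _)] at h
    exact regular_of_maximalIdeal_eq_bot h
  | succ N ih =>
    intro R _ _ _ h n hpd
    by_cases hbot : maximalIdeal R = ⊥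
    · exact regular_of_maximalIdeal_eq_bot hbot
    by_cases hass : maximalIdeal R ∈ associatedPrimes R R
    · exfalso
      rw [AssociatedPrimes.mem_iff, isAssociatedPrime_iff] at hass
      obtain ⟨-, s, hs⟩ := hass
      have hsm : ∀ a ∈ maximalIdeal R, s * a = 0 := by
        intro a ha
        rw [hs, Submodule.mem_colon_singleton] at ha
        simpa [mul_comm] using ha
      have hs0 : s ≠ 0 := by
        rintro rfl
        apply (maximalIdeal.isMaximal R).ne_top
        rw [hs, Ideal.eq_top_iff_one, Submodule.mem_colon_singleton]
        simp
      have hfree := free_of_depth_zero hs0 hsm n _ hpd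
      apply hbot
      rw [eq_bot_iff]
      intro a ha
      let b := Module.Free.chooseBasis R (R ⧸ maximalIdeal R)
      have : Nontrivial (R ⧸ maximalIdeal R) :=
        Ideal.Quotient.nontrivial_iff.2 (maximalIdeal.isMaximal R).ne_top
      obtain ⟨i⟩ := b.index_nonempty
      have h0 : a • b i = 0 := by
        obtain ⟨c, hc⟩ := Ideal.Quotient.mk_surjective (b i)
        rw [← hc]
        change Ideal.Quotient.mk (maximalIdeal R) (a * c) = 0
        rw [Ideal.Quotient.eq_zero_iff_mem]
        exact Ideal.mul_mem_right _ _ ha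
      have h1 := congrArg (fun z => b.repr z i) h0
      simpa using h1
    · obtain ⟨x, hx, hx2, hxp⟩ := avoid (associatedPrimes R R)
        (associatedPrimes.finite R R) (fun p hp => hp.isPrime) (by
          intro p hp hle
          apply hass
          rwa [(maximalIdeal.isMaximal R).eq_of_le hp.isPrime.ne_top hle])
        (maximalIdeal_not_le_sq hbot)
      have regR : IsSMulRegular R x := by
        have hnot : x ∉ ⋃ p ∈ associatedPrimes R R, (p : Set R) := by
          simp only [Set.mem_iUnion, not_exists]
          exact hxp
        rw [biUnion_associatedPrimes_eq_zero_divisors] at hnot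
        intro a b hab
        by_contra hne
        refine hnot ⟨a - b, sub_ne_zero.2 hne, ?_⟩
        rw [smul_sub, sub_eq_zero]
        exact hab
      have regm : IsSMulRegular (maximalIdeal R) x := by
        intro a c hac
        apply Subtype.ext
        exact regR (congrArg Subtype.val hac)
      have := isLocalRing_quot hx
      have h1 := (pd_residue_iff n).1 (hpdle_mono (Nat.le_succ n) hpd)
      have h2 := (change_of_rings hx regR n _ regm).2 h1
      obtain ⟨i, p, hpi⟩ := retract_maximalIdeal hx hx2
      have ret : Retract (ModuleCat.of (R ⧸ Ideal.span {x})
          (maximalIdeal (R ⧸ Ideal.span {x})))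
          (ModuleCat.of (R ⧸ Ideal.span {x}) (QuotSMulTop x (maximalIdeal R))) :=
        { i := ModuleCat.ofHom i
          r := ModuleCat.ofHom p
          retract := by
            rw [← ModuleCat.ofHom_comp, hpi]
            rfl }
      have h3 := ret.hasProjectiveDimensionLT (n + 1)
      have h4 := (pd_residue_iff n).2 h3
      have e1 := embdim_quot_le hx hx2
      have e2 := embdim_le_quot hx
      have hreg := ih (R ⧸ Ideal.span {x}) (by omega) _ h4
      exact regular_of_quot hx regR

end FiniteToRegular

theorem serre_regular_iff_finite_globalDim
    (R : Type) [CommRing R] [IsLocalRing R] [IsNoetherianRing R] :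
    ((∃ n : ℕ, GlobalDimLE R n) ↔ IsRegularLocal R) ∧
      (IsRegularLocal R → ∀ n : ℕ, (GlobalDimLE R n ↔ ringKrullDim R ≤ n)) := by
  have hG : ∀ n, GlobalDimLE R n ↔ ∀ M : ModuleCat.{0} R, HasProjectiveDimensionLE M n :=
    fun n => forall_congr' fun M => projDimLE_iff R M n
  have hR : IsRegularLocal R ↔ IsRegularLocalRing R :=
    (IsRegularLocalRing.iff_finrank_cotangentSpace R).symm
  have key : IsRegularLocal R → ∀ n : ℕ, (GlobalDimLE R n ↔ ringKrullDim R ≤ n) := by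
    intro h n
    have hreg := hR.1 h
    rw [hG, ← (isRegularLocalRing_iff R).1 hreg]
    constructor
    · intro hn
      exact_mod_cast regular_pd_residue (hn _)
    · intro hn
      have hn' : (IsLocalRing.maximalIdeal R).spanFinrank ≤ n := by exact_mod_cast hn
      exact gd_of_quotients n fun I => hpdle_mono hn' (regular_pd_le _ R rfl (R ⧸ I))
  refine ⟨⟨?_, ?_⟩, key⟩
  · rintro ⟨n, hn⟩
    exact hR.2 (regular_of_pd _ R rfl n ((hG n).1 hn _))
  · intro h
    have hreg := hR.1 h
    refine ⟨(IsLocalRing.maximalIdeal R).spanFinrank, (key h _).2 ?_⟩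
    rw [← (isRegularLocalRing_iff R).1 hreg]
end

section
/- An associative algebra A over a field k is formally smooth (i.e., every algebra homomorphism A → R/N, with N a nilpotent two-sided ideal of an algebra R, lifts to A → R) if and only if the kernel Ω¹_A of the multiplication map A ⊗_k A → A is a projective A-bimodule. -/
/-!
STATEMENT 11: an associative `k`-algebra `A` is formally smooth (every `k`-algebra map
`A → R/N`, with `N` a nilpotent two-sided ideal of `R`, lifts to `A → R`) if and only if
the kernel `Ω¹_A` of the multiplication map `A ⊗_k A → A` is a projective `A`-bimodule,
i.e. projective as a module over `A^e = A ⊗_k Aᵐᵒᵖ`.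
-/

open scoped TensorProduct

set_option synthInstance.maxHeartbeats 400000
set_option maxHeartbeats 1000000

/-- `A` is formally smooth over `k`: for every surjective `k`-algebra homomorphism
`p : R → S` whose kernel is nilpotent (some power of it, i.e. all products of `m`
kernel elements, vanish), every `k`-algebra map `A → S` lifts through `p`. -/
def FormallySmoothNC (k A : Type) [Field k] [Ring A] [Algebra k A] : Prop :=
  ∀ (R S : Type) [Ring R] [Algebra k R] [Ring S] [Algebra k S] (p : R →ₐ[k] S),
    Function.Surjective p →
    (∃ m : ℕ, ∀ f : Fin m → R, (∀ i, p (f i) = 0) → (List.ofFn f).prod = 0) →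
    ∀ φ : A →ₐ[k] S, ∃ ψ : A →ₐ[k] R, p.comp ψ = φ

section

variable (k A : Type) [Field k] [Ring A] [Algebra k A]

/-- The bimodule structure on `A`: `A` is a module over `A^e = A ⊗[k] Aᵐᵒᵖ`,
via `(a ⊗ bᵒᵖ) • x = a * x * b`. -/
noncomputable local instance : Module (A ⊗[k] Aᵐᵒᵖ) A := TensorProduct.Algebra.module

/-- The multiplication map `A^e → A`, `a ⊗ bᵒᵖ ↦ a * b`, as a map of `A^e`-modules.
Under the identification `A ⊗[k] A ≅ A^e` of left `A^e`-modules this is the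
multiplication map `A ⊗[k] A → A`, so its kernel is `Ω¹_A`. -/
noncomputable def mulMap : (A ⊗[k] Aᵐᵒᵖ) →ₗ[A ⊗[k] Aᵐᵒᵖ] A :=
  LinearMap.toSpanSingleton _ _ (1 : A)


section helpers

variable {k A}

theorem mulMap_tmul (a : A) (b : Aᵐᵒᵖ) : mulMap k A (a ⊗ₜ[k] b) = a * b.unop := by
  simp [mulMap, TensorProduct.Algebra.smul_def]

theorem smul_tmul_A (a : A) (b : Aᵐᵒᵖ) (x : A) : (a ⊗ₜ[k] b) • x = a * (x * b.unop) := by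
  simp [TensorProduct.Algebra.smul_def]

/-- The universal derivation. -/
noncomputable def dd (a : A) : LinearMap.ker (mulMap k A) :=
  ⟨a ⊗ₜ[k] (1 : Aᵐᵒᵖ) - (1 : A) ⊗ₜ[k] MulOpposite.op a, by
    rw [LinearMap.mem_ker, map_sub, mulMap_tmul, mulMap_tmul]; simp⟩

theorem dd_mul (a b : A) : dd (k := k) (a * b) =
    (a ⊗ₜ[k] (1 : Aᵐᵒᵖ)) • dd b + ((1 : A) ⊗ₜ[k] MulOpposite.op b) • dd a := by
  apply Subtype.ext
  simp [dd, mul_sub, Algebra.TensorProduct.tmul_mul_tmul]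

/-- The free bimodule on `A` maps onto `Ω`. -/
noncomputable def piMap : (A →₀ (A ⊗[k] Aᵐᵒᵖ)) →ₗ[A ⊗[k] Aᵐᵒᵖ] LinearMap.ker (mulMap k A) :=
  Finsupp.linearCombination _ dd

theorem piMap_single (y : A) (t : A ⊗[k] Aᵐᵒᵖ) : piMap (Finsupp.single y t) = t • dd y :=
  Finsupp.linearCombination_single _ _ _

theorem piMap_aux (t : A ⊗[k] Aᵐᵒᵖ) :
    ∃ u : A →₀ (A ⊗[k] Aᵐᵒᵖ),
      (piMap u : A ⊗[k] Aᵐᵒᵖ) = t - mulMap k A t ⊗ₜ[k] (1 : Aᵐᵒᵖ) := by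
  induction t using TensorProduct.induction_on with
  | zero => exact ⟨0, by simp⟩
  | tmul x y =>
    refine ⟨Finsupp.single y.unop ((-x) ⊗ₜ 1), ?_⟩
    rw [mulMap_tmul]
    rw [piMap_single]
    simp only [Submodule.coe_smul, dd, smul_eq_mul, mul_sub, Algebra.TensorProduct.tmul_mul_tmul]
    simp [TensorProduct.neg_tmul, neg_add_eq_sub]
  | add t₁ t₂ h₁ h₂ =>
    obtain ⟨u₁, h₁⟩ := h₁
    obtain ⟨u₂, h₂⟩ := h₂
    refine ⟨u₁ + u₂, ?_⟩
    rw [map_add, map_add, Submodule.coe_add, h₁, h₂, TensorProduct.add_tmul]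
    abel

theorem piMap_surjective : Function.Surjective (piMap (k := k) (A := A)) := by
  rintro ⟨t, ht⟩
  obtain ⟨u, hu⟩ := piMap_aux t
  refine ⟨u, Subtype.ext ?_⟩
  rw [LinearMap.mem_ker] at ht
  rw [hu, ht]
  simp

/-- A `k`-linear bilinear functional on `A ⊗ Aᵐᵒᵖ` attached to two linear maps into an algebra. -/
noncomputable def bil {R : Type} [Ring R] [Algebra k R] (f s : A →ₗ[k] R) :
    (A ⊗[k] Aᵐᵒᵖ) →ₗ[k] R :=
  TensorProduct.lift ((LinearMap.mul k R).compl₁₂ f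
    (s ∘ₗ (MulOpposite.opLinearEquiv k).symm.toLinearMap))

theorem bil_tmul {R : Type} [Ring R] [Algebra k R] (f s : A →ₗ[k] R) (x : A) (z : Aᵐᵒᵖ) :
    bil f s (x ⊗ₜ z) = f x * s z.unop := by
  simp [bil]

theorem exists_linear_lift {R S : Type} [Ring R] [Algebra k R] [Ring S] [Algebra k S]
    (p : R →ₐ[k] S) (hp : Function.Surjective p)
    (hk : ∀ x y, p x = 0 → p y = 0 → x * y = 0) (φ : A →ₐ[k] S) :
    ∃ s : A →ₗ[k] R, (∀ a, p (s a) = φ a) ∧ s 1 = 1 := by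
  obtain ⟨g, hg⟩ := LinearMap.exists_rightInverse_of_surjective p.toLinearMap
    (LinearMap.range_eq_top.2 hp)
  have hg' : ∀ x, p (g x) = x := fun x => LinearMap.congr_fun hg x
  by_cases h1 : (1 : A) = 0
  · have : Subsingleton A := subsingleton_of_zero_eq_one h1.symm
    have hS : ∀ a : A, φ a = 0 := fun a => by rw [Subsingleton.elim a 0, map_zero]
    have h10 : (1 : S) = 0 := by rw [← map_one φ]; exact hS 1
    have hpR : p 1 = 0 := by rw [map_one, h10]
    have hR : (1 : R) = 0 := by simpa using hk 1 1 hpR hpR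
    exact ⟨0, fun a => by rw [hS a]; simp, by rw [hR]; rfl⟩
  · obtain ⟨l, hl⟩ := Module.Projective.exists_dual_ne_zero k h1
    refine ⟨g ∘ₗ φ.toLinearMap + (l.smulRight ((l 1)⁻¹ • (1 - g 1))), ?_, ?_⟩
    · intro a
      simp [hg']
    · simp [smul_smul, hl]

theorem sq_zero_lift (hP : Module.Projective (A ⊗[k] Aᵐᵒᵖ) (LinearMap.ker (mulMap k A)))
    {R S : Type} [Ring R] [Algebra k R] [Ring S] [Algebra k S]
    (p : R →ₐ[k] S) (hp : Function.Surjective p)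
    (hk : ∀ x y, p x = 0 → p y = 0 → x * y = 0) (φ : A →ₐ[k] S) :
    ∃ ψ : A →ₐ[k] R, p.comp ψ = φ := by
  obtain ⟨s, hs, hs1⟩ := exists_linear_lift p hp hk φ
  obtain ⟨σ, hσ⟩ := Module.projective_lifting_property (piMap (k := k) (A := A)) LinearMap.id
    piMap_surjective
  -- the curvature
  let c : A → A →ₗ[k] R := fun y =>
    (LinearMap.mulRight k (s y)) ∘ₗ s - s ∘ₗ (LinearMap.mulRight k y)
  have hc : ∀ x y, c y x = s x * s y - s (x * y) := fun x y => by simp [c]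
  have hc0 : ∀ x y, p (c y x) = 0 := fun x y => by simp [hc, hs]
  have hNr : ∀ n x y, p n = 0 → n * s (x * y) = n * s x * s y := by
    intro n x y hn
    have := hk n (c y x) hn (hc0 x y)
    rw [hc, mul_sub, sub_eq_zero] at this
    rw [← this, mul_assoc]
  have hNl : ∀ n x y, p n = 0 → s (x * y) * n = s x * (s y * n) := by
    intro n x y hn
    have := hk (c y x) n (hc0 x y) hn
    rw [hc, sub_mul, sub_eq_zero] at this
    rw [← this, mul_assoc]
  let Φ : (A →₀ (A ⊗[k] Aᵐᵒᵖ)) →+ R :=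
    Finsupp.liftAddHom fun y => (bil (c y) s).toAddMonoidHom
  have hΦ : ∀ y x z, Φ (Finsupp.single y (x ⊗ₜ z)) = c y x * s z.unop := by
    intro y x z
    simp [Φ, bil_tmul]
  have ind : ∀ (P : (A →₀ (A ⊗[k] Aᵐᵒᵖ)) → Prop), P 0 → (∀ u v, P u → P v → P (u + v)) →
      (∀ y x z, P (Finsupp.single y (x ⊗ₜ z))) → ∀ u, P u := by
    intro P h0 hadd hs u
    induction u using Finsupp.induction_linear with
    | zero => exact h0
    | add u v hu hv => exact hadd u v hu hv
    | single y t =>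
      induction t using TensorProduct.induction_on with
      | zero => simpa using h0
      | tmul x z => exact hs y x z
      | add t₁ t₂ h₁ h₂ => rw [Finsupp.single_add]; exact hadd _ _ h₁ h₂
  have hΦ0 : ∀ u, p (Φ u) = 0 := by
    refine ind _ (by simp) (fun u v hu hv => by rw [map_add, map_add, hu, hv, add_zero]) ?_
    intro y x z
    rw [hΦ, map_mul, hc0, zero_mul]
  have hΦr : ∀ b u, Φ (((1 : A) ⊗ₜ[k] MulOpposite.op b) • u) = Φ u * s b := by
    intro b
    refine ind _ (by simp) (fun u v hu hv => by
      rw [smul_add, map_add, map_add, hu, hv, add_mul]) ?_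
    intro y x z
    rw [Finsupp.smul_single, smul_eq_mul, Algebra.TensorProduct.tmul_mul_tmul, hΦ, hΦ, one_mul,
      MulOpposite.unop_mul, MulOpposite.unop_op, hNr _ _ _ (hc0 _ _)]
  have hcoc : ∀ a x y, c y (a * x) = s a * c y x + c (x * y) a - c x a * s y := by
    intro a x y
    simp only [hc, mul_sub, sub_mul, mul_assoc]
    abel
  let ca : A → A →ₗ[k] R := fun a =>
    (LinearMap.mulLeft k (s a)) ∘ₗ s - s ∘ₗ (LinearMap.mulLeft k a)
  have hca : ∀ a y, ca a y = c y a := fun x y => by simp [ca, hc]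
  have hΦl : ∀ a u, Φ ((a ⊗ₜ[k] (1 : Aᵐᵒᵖ)) • u) = s a * Φ u +
      bil (ca a) s (piMap u : A ⊗[k] Aᵐᵒᵖ) := by
    intro a
    refine ind _ (by simp) (fun u v hu hv => by
      rw [smul_add, map_add, map_add, hu, hv, mul_add, map_add, Submodule.coe_add, map_add]
      abel) ?_
    intro y x z
    have e : ((piMap (Finsupp.single y (x ⊗ₜ[k] z)) : LinearMap.ker (mulMap k A)) :
        A ⊗[k] Aᵐᵒᵖ) = (x * y) ⊗ₜ z - x ⊗ₜ (z * MulOpposite.op y) := by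
      simp [piMap, dd, mul_sub, Algebra.TensorProduct.tmul_mul_tmul]
    rw [e, map_sub, bil_tmul, bil_tmul, hca, hca,
      Finsupp.smul_single, smul_eq_mul, Algebra.TensorProduct.tmul_mul_tmul, hΦ, hΦ, one_mul,
      MulOpposite.unop_mul, MulOpposite.unop_op, hNr _ _ _ (hc0 _ _), hcoc]
    simp only [add_mul, sub_mul, mul_assoc]
    abel
  have hτk : ∀ (r : k) (a : A), dd (k := k) (r • a) = (algebraMap k (A ⊗[k] Aᵐᵒᵖ) r) • dd a := by
    intro r a
    apply Subtype.ext
    rw [Submodule.coe_smul, smul_eq_mul, ← Algebra.smul_def]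
    simp [dd, smul_sub, TensorProduct.smul_tmul']
  have hτa : ∀ (a b : A), dd (k := k) (a + b) = dd a + dd b := by
    intro a b
    apply Subtype.ext
    simp only [dd, Submodule.coe_add, TensorProduct.add_tmul, MulOpposite.op_add,
      TensorProduct.tmul_add]
    abel
  let g : A → R := fun a => Φ (σ (dd a))
  have hg0 : ∀ a, p (g a) = 0 := fun a => hΦ0 _
  have hπσ : ∀ w, piMap (σ w) = w := fun w => LinearMap.congr_fun hσ w
  have hgadd : ∀ a b, g (a + b) = g a + g b := fun a b => by simp only [g, hτa, map_add]
  have hgmul : ∀ a b, g (a * b) = s a * g b + g a * s b + (s a * s b - s (a * b)) := by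
    intro a b
    simp only [g]
    rw [dd_mul, map_add, map_add, LinearMap.map_smul, LinearMap.map_smul, hΦr, hΦl, hπσ]
    have : bil (ca a) s ((dd b : LinearMap.ker (mulMap k A)) : A ⊗[k] Aᵐᵒᵖ) =
        s a * s b - s (a * b) := by
      simp only [dd]
      rw [map_sub, bil_tmul, bil_tmul, hca, hca, hc, hc]
      simp [hs1]
    rw [this]; abel
  have hg1 : g 1 = 0 := by
    have := hgmul 1 1
    simpa [hs1] using this
  have hsmul1 : ∀ (r : k), s (algebraMap k A r) = algebraMap k R r := by
    intro r
    rw [Algebra.algebraMap_eq_smul_one, map_smul, hs1, Algebra.algebraMap_eq_smul_one]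
  have hgr : ∀ (r : k), g (algebraMap k A r) = 0 := by
    intro r
    simp only [g]
    rw [Algebra.algebraMap_eq_smul_one, hτk]
    have : dd (k := k) (1 : A) = 0 := Subtype.ext (by simp [dd])
    rw [this]; simp
  refine ⟨{ toFun := fun a => s a + g a
            map_one' := by rw [hs1, hg1, add_zero]
            map_mul' := fun a b => by
              have := hk (g a) (g b) (hg0 a) (hg0 b)
              rw [hgmul, add_mul, mul_add, mul_add, this]
              abel
            map_zero' := by simp only [g]; rw [map_zero, show dd (k := k) (0 : A) = 0 from
              Subtype.ext (by simp [dd])]; simp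
            map_add' := fun a b => by rw [map_add, hgadd]; abel
            commutes' := fun r => by rw [hsmul1, hgr, add_zero] }, ?_⟩
  ext a
  simp [hs, hg0]

theorem nilp_lift (hP : Module.Projective (A ⊗[k] Aᵐᵒᵖ) (LinearMap.ker (mulMap k A))) (m : ℕ) :
    ∀ (R S : Type) [Ring R] [Algebra k R] [Ring S] [Algebra k S] (p : R →ₐ[k] S),
    Function.Surjective p →
    (∀ f : Fin (m + 1) → R, (∀ i, p (f i) = 0) → (List.ofFn f).prod = 0) →
    ∀ φ : A →ₐ[k] S, ∃ ψ : A →ₐ[k] R, p.comp ψ = φ := by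
  induction m with
  | zero =>
    intro R S _ _ _ _ p hp hN φ
    refine sq_zero_lift hP p hp (fun x y hx hy => ?_) φ
    have := hN (fun _ => x) (fun _ => hx)
    simp at this
    rw [this, zero_mul]
  | succ m ih =>
    intro R S _ _ _ _ p hp hN φ
    let J : Ideal R :=
      { carrier := {x | p x = 0 ∧ ∀ n, p n = 0 → x * n = 0}
        zero_mem' := by simp
        add_mem' := fun {a b} ha hb => ⟨by rw [map_add, ha.1, hb.1, add_zero], fun n hn => by
          rw [add_mul, ha.2 n hn, hb.2 n hn, add_zero]⟩
        smul_mem' := fun r x hx => ⟨by rw [smul_eq_mul, map_mul, hx.1, mul_zero], fun n hn => by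
          rw [smul_eq_mul, mul_assoc, hx.2 n hn, mul_zero]⟩ }
    have hJ : ∀ x, x ∈ J ↔ (p x = 0 ∧ ∀ n, p n = 0 → x * n = 0) := fun x => Iff.rfl
    have : J.IsTwoSided := ⟨fun {a} b ha => ⟨by rw [map_mul, ha.1, zero_mul], fun n hn => by
      rw [mul_assoc, ha.2 _ (by rw [map_mul, hn, mul_zero])]⟩⟩
    let p' : R ⧸ J →ₐ[k] S := Ideal.Quotient.liftₐ J p (fun a ha => ha.1)
    have hp' : ∀ x, p' (Ideal.Quotient.mkₐ k J x) = p x := fun x => rfl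
    obtain ⟨ψ, hψ⟩ := ih (R ⧸ J) S p' (fun y => by
        obtain ⟨x, rfl⟩ := hp y
        exact ⟨_, hp' x⟩) (by
      intro f hf
      choose F hF using fun i => Ideal.Quotient.mkₐ_surjective k J (f i)
      obtain rfl : f = fun i => Ideal.Quotient.mkₐ k J (F i) := funext fun i => (hF i).symm
      have hF0 : ∀ i, p (F i) = 0 := hf
      have e : (List.ofFn fun i => Ideal.Quotient.mkₐ k J (F i)).prod =
          Ideal.Quotient.mkₐ k J (List.ofFn F).prod := by
        rw [map_list_prod, List.map_ofFn]; rfl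
      rw [e]
      apply Ideal.Quotient.eq_zero_iff_mem.2
      rw [hJ]
      refine ⟨?_, fun n hn => ?_⟩
      · rw [List.ofFn_succ, List.prod_cons, map_mul, hF0, zero_mul]
      · have := hN (Fin.snoc F n) (fun i => by
          refine Fin.lastCases ?_ (fun j => ?_) i
          · simpa using hn
          · simpa using hF0 j)
        rw [List.ofFn_succ'] at this
        simpa [mul_assoc] using this) φ
    obtain ⟨χ, hχ⟩ := sq_zero_lift hP (Ideal.Quotient.mkₐ k J)
      (Ideal.Quotient.mkₐ_surjective k J) (fun x y hx hy => by
        have hx' : x ∈ J := Ideal.Quotient.eq_zero_iff_mem.1 hx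
        have hy' : y ∈ J := Ideal.Quotient.eq_zero_iff_mem.1 hy
        exact hx'.2 y hy'.1) ψ
    refine ⟨χ, ?_⟩
    rw [← hψ, ← hχ]
    rfl

/-- Type synonym carrying the left and right `A`-module structures of an `A^e`-module. -/
def BM (_k _A M : Type) : Type := M

section BM

variable (k A) (M : Type) [AddCommGroup M] [Module (A ⊗[k] Aᵐᵒᵖ) M]

instance : AddCommGroup (BM k A M) := inferInstanceAs (AddCommGroup M)

/-- The underlying `A^e`-module structure. -/
instance instBMe : Module (A ⊗[k] Aᵐᵒᵖ) (BM k A M) := inferInstanceAs (Module (A ⊗[k] Aᵐᵒᵖ) M)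

noncomputable instance instBMl : Module A (BM k A M) :=
  Module.compHom (BM k A M)
    (Algebra.TensorProduct.includeLeft : A →ₐ[k] (A ⊗[k] Aᵐᵒᵖ)).toRingHom

noncomputable instance instBMr : Module Aᵐᵒᵖ (BM k A M) :=
  Module.compHom (BM k A M)
    (Algebra.TensorProduct.includeRight : Aᵐᵒᵖ →ₐ[k] (A ⊗[k] Aᵐᵒᵖ)).toRingHom

noncomputable instance instBMk : Module k (BM k A M) :=
  Module.compHom (BM k A M) (algebraMap k (A ⊗[k] Aᵐᵒᵖ))

variable {k A M}

theorem bm_l (a : A) (x : BM k A M) : a • x = (a ⊗ₜ[k] (1 : Aᵐᵒᵖ)) • x := rfl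

theorem bm_r (a : Aᵐᵒᵖ) (x : BM k A M) : a • x = ((1 : A) ⊗ₜ[k] a) • x := rfl

theorem bm_k (a : k) (x : BM k A M) : a • x = (algebraMap k (A ⊗[k] Aᵐᵒᵖ) a) • x := rfl

instance : SMulCommClass A Aᵐᵒᵖ (BM k A M) := ⟨fun a b x => by
  rw [bm_l, bm_l, bm_r, bm_r, smul_smul, smul_smul, Algebra.TensorProduct.tmul_mul_tmul,
    Algebra.TensorProduct.tmul_mul_tmul]
  simp⟩

instance : IsScalarTower k A (BM k A M) := ⟨fun a b x => by
  rw [bm_l, bm_l, bm_k, smul_smul, ← Algebra.smul_def, TensorProduct.smul_tmul']⟩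

instance : IsScalarTower k Aᵐᵒᵖ (BM k A M) := ⟨fun a b x => by
  rw [bm_r, bm_r, bm_k, smul_smul, ← Algebra.smul_def, TensorProduct.tmul_smul]⟩

/-- Functoriality of the trivial square-zero extension. -/
noncomputable def sqMap {M' : Type} [AddCommGroup M'] [Module (A ⊗[k] Aᵐᵒᵖ) M']
    (h : M →ₗ[A ⊗[k] Aᵐᵒᵖ] M') :
    TrivSqZeroExt A (BM k A M) →ₐ[k] TrivSqZeroExt A (BM k A M') :=
  AlgHom.ofLinearMap
    { toFun := fun x => (x.fst, (h (x.snd : M) : M'))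
      map_add' := fun x y => TrivSqZeroExt.ext rfl (h.map_add _ _)
      map_smul' := fun r x => TrivSqZeroExt.ext rfl (h.map_smul _ _) }
    (TrivSqZeroExt.ext rfl h.map_zero)
    (fun x y => TrivSqZeroExt.ext rfl (by
      refine (h.map_add _ _).trans ?_
      exact congrArg₂ (· + ·) (h.map_smul _ _) (h.map_smul _ _)))

theorem sqMap_fst {M' : Type} [AddCommGroup M'] [Module (A ⊗[k] Aᵐᵒᵖ) M']
    (h : M →ₗ[A ⊗[k] Aᵐᵒᵖ] M') (x : TrivSqZeroExt A (BM k A M)) : (sqMap h x).fst = x.fst := rfl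

theorem sqMap_snd {M' : Type} [AddCommGroup M'] [Module (A ⊗[k] Aᵐᵒᵖ) M']
    (h : M →ₗ[A ⊗[k] Aᵐᵒᵖ] M') (x : TrivSqZeroExt A (BM k A M)) :
    (sqMap h x).snd = h (x.snd : M) := rfl

end BM

theorem dd_smul (r : k) (a : A) :
    dd (k := k) (r • a) = (algebraMap k (A ⊗[k] Aᵐᵒᵖ) r) • dd a := by
  apply Subtype.ext
  rw [Submodule.coe_smul, smul_eq_mul, ← Algebra.smul_def]
  simp [dd, smul_sub, TensorProduct.smul_tmul']

theorem dd_add (a b : A) : dd (k := k) (a + b) = dd a + dd b := by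
  apply Subtype.ext
  simp only [dd, Submodule.coe_add, TensorProduct.add_tmul, MulOpposite.op_add,
    TensorProduct.tmul_add]
  abel

theorem dd_one : dd (k := k) (1 : A) = 0 := Subtype.ext (by simp [dd])

/-- The algebra map `a ↦ (a, da)`. -/
noncomputable def ddHom : A →ₐ[k] TrivSqZeroExt A (BM k A (LinearMap.ker (mulMap k A))) :=
  AlgHom.ofLinearMap
    { toFun := fun a => (a, dd (k := k) a)
      map_add' := fun a b => TrivSqZeroExt.ext rfl (dd_add a b)
      map_smul' := fun r a => TrivSqZeroExt.ext rfl (dd_smul r a) }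
    (TrivSqZeroExt.ext rfl dd_one)
    (fun a b => TrivSqZeroExt.ext rfl (dd_mul a b))

theorem section_of_smooth (h : FormallySmoothNC k A) (M : Type) [AddCommGroup M]
    [Module (A ⊗[k] Aᵐᵒᵖ) M] (π : M →ₗ[A ⊗[k] Aᵐᵒᵖ] LinearMap.ker (mulMap k A))
    (hπ : Function.Surjective π) :
    ∃ σ : LinearMap.ker (mulMap k A) →ₗ[A ⊗[k] Aᵐᵒᵖ] M, ∀ w, π (σ w) = w := by
  let πB : BM k A M →ₗ[A ⊗[k] Aᵐᵒᵖ] LinearMap.ker (mulMap k A) := π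
  obtain ⟨ψ, hψ⟩ := h (TrivSqZeroExt A (BM k A M))
    (TrivSqZeroExt A (BM k A (LinearMap.ker (mulMap k A)))) (sqMap (k := k) π)
    (fun y => by
      obtain ⟨u, hu⟩ := hπ y.snd
      exact ⟨(y.fst, u), TrivSqZeroExt.ext rfl hu⟩)
    ⟨2, fun f hf => by
      have h0 : ∀ i, (f i).fst = 0 := fun i => congrArg TrivSqZeroExt.fst (hf i)
      simp only [List.ofFn_succ, List.ofFn_zero, List.prod_cons, List.prod_nil, mul_one]
      refine TrivSqZeroExt.ext ?_ ?_
      · rw [TrivSqZeroExt.fst_mul, h0, zero_mul]; rfl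
      · rw [TrivSqZeroExt.snd_mul, h0, h0, MulOpposite.op_zero, zero_smul, zero_smul, add_zero]
        rfl⟩ ddHom
  have hfst : ∀ a, (ψ a).fst = a := fun a =>
    congrArg TrivSqZeroExt.fst (AlgHom.congr_fun hψ a)
  have hsnd : ∀ a, πB (ψ a).snd = dd a := fun a =>
    congrArg TrivSqZeroExt.snd (AlgHom.congr_fun hψ a)
  let τ : A →ₗ[k] BM k A M := (TrivSqZeroExt.sndHom A (BM k A M)).restrictScalars k ∘ₗ ψ.toLinearMap
  have hτ : ∀ a, τ a = (ψ a).snd := fun a => rfl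
  have hτm : ∀ a b, τ (a * b) = a • τ b + MulOpposite.op b • τ a := by
    intro a b
    rw [hτ, map_mul, TrivSqZeroExt.snd_mul, hfst, hfst]; rfl
  let T : (A ⊗[k] Aᵐᵒᵖ) →ₗ[k] BM k A M := TensorProduct.lift
    (LinearMap.compl₂ (LinearMap.mk₂ k (fun (a : A) (x : BM k A M) => -(a • x))
      (fun a b x => by rw [add_smul, neg_add]) (fun r a x => by rw [smul_assoc, smul_neg])
      (fun a x y => by rw [smul_add, neg_add])
      (fun r a x => by rw [smul_neg, bm_k, bm_k, bm_l, bm_l, smul_smul, smul_smul,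
        Algebra.commutes]))
      (τ ∘ₗ (MulOpposite.opLinearEquiv k).symm.toLinearMap))
  have hT : ∀ x z, T (x ⊗ₜ z) = -(x • τ z.unop) := fun x z => by simp [T]
  have hTs : ∀ a b t, T ((a ⊗ₜ b) * t) = (a ⊗ₜ[k] b) • T t - (a * mulMap k A t) • τ b.unop := by
    intro a b t
    induction t using TensorProduct.induction_on with
    | zero => simp
    | tmul x z =>
      rw [Algebra.TensorProduct.tmul_mul_tmul, hT, hT, mulMap_tmul, MulOpposite.unop_mul, hτm,
        smul_add, smul_neg, neg_add, smul_smul, mul_assoc]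
      simp only [bm_l, bm_r, smul_smul, Algebra.TensorProduct.tmul_mul_tmul]
      simp
      abel
    | add t₁ t₂ h₁ h₂ =>
      rw [mul_add, map_add, h₁, h₂, map_add, map_add, smul_add, mul_add, add_smul]
      abel
  have hTl : ∀ r t, mulMap k A t = 0 → T (r * t) = r • T t := by
    intro r t ht
    induction r using TensorProduct.induction_on with
    | zero => rw [zero_mul, map_zero]; exact (zero_smul (A ⊗[k] Aᵐᵒᵖ) (T t)).symm
    | tmul a b => rw [hTs, ht, mul_zero, zero_smul, sub_zero]
    | add r₁ r₂ h₁ h₂ => rw [add_mul, map_add, h₁, h₂, add_smul]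
  have hπT : ∀ t, ((πB (T t) : LinearMap.ker (mulMap k A)) : A ⊗[k] Aᵐᵒᵖ) =
      t - mulMap k A t ⊗ₜ[k] (1 : Aᵐᵒᵖ) := by
    intro t
    induction t using TensorProduct.induction_on with
    | zero =>
      rw [map_zero, map_zero, map_zero, TensorProduct.zero_tmul, sub_zero]
      rfl
    | tmul x z =>
      have e : πB (T (x ⊗ₜ z)) = ((-x) ⊗ₜ[k] (1 : Aᵐᵒᵖ)) • dd (k := k) z.unop := by
        rw [hT, ← hsnd, ← LinearMap.map_smul, ← hτ, ← bm_l, neg_smul]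
      rw [e, mulMap_tmul]
      simp only [Submodule.coe_smul, dd, smul_eq_mul, mul_sub,
        Algebra.TensorProduct.tmul_mul_tmul]
      simp [TensorProduct.neg_tmul, neg_add_eq_sub]
    | add t₁ t₂ h₁ h₂ =>
      have e : πB (T (t₁ + t₂)) = πB (T t₁) + πB (T t₂) := by
        rw [map_add, map_add]
      rw [e, Submodule.coe_add, h₁, h₂, map_add, TensorProduct.add_tmul]
      abel
  let σ : LinearMap.ker (mulMap k A) →ₗ[A ⊗[k] Aᵐᵒᵖ] BM k A M :=
    { toFun := fun w => T w.1
      map_add' := fun v w => T.map_add _ _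
      map_smul' := fun r w => hTl r w.1 w.2 }
  refine ⟨σ, fun w => Subtype.ext ?_⟩
  refine (hπT w.1).trans ?_
  rw [LinearMap.mem_ker.1 w.2, TensorProduct.zero_tmul, sub_zero]

theorem proj_of_smooth (h : FormallySmoothNC k A) :
    Module.Projective (A ⊗[k] Aᵐᵒᵖ) (LinearMap.ker (mulMap k A)) := by
  obtain ⟨σ, hσ⟩ := section_of_smooth h (LinearMap.ker (mulMap k A) →₀ (A ⊗[k] Aᵐᵒᵖ))
    (Finsupp.linearCombination _ id)
    (fun w => ⟨Finsupp.single w 1, (Finsupp.linearCombination_single _ _ _).trans (one_smul _ _)⟩)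
  exact ⟨σ, hσ⟩

end helpers

theorem formallySmooth_iff_omega_projective :
    FormallySmoothNC k A ↔
      Module.Projective (A ⊗[k] Aᵐᵒᵖ) (LinearMap.ker (mulMap k A)) := by
  refine ⟨proj_of_smooth, fun hP R S _ _ _ _ p hp hN φ => ?_⟩
  obtain ⟨m, hm⟩ := hN
  refine nilp_lift hP m R S p hp (fun f hf => ?_) φ
  rw [List.ofFn_succ, List.prod_cons, hm (fun i => f i.succ) (fun i => hf _), mul_zero]

end
end
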